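/- For every ε > 0 and every natural number N there exist a natural number n ≥ N and a spreading linear triple system F on an n-element set V with |F| < (5/36 + ε)·n². -/

import Mathlib

open Finset

variable {α : Type*}

/-- A pair of (distinct) vertices is covered if it lies in some triple of `F`. -/
def Covered [DecidableEq α] (F : Finset (Finset α)) (x y : α) : Prop :=
  ∃ T ∈ F, x ∈ T ∧ y ∈ T

instance [DecidableEq α] (F : Finset (Finset α)) (x y : α) : Decidable (Covered F x y) :=
  inferInstanceAs (Decidable (∃ T ∈ F, x ∈ T ∧ y ∈ T))

/-- Linear triple system on `V`. -/
def IsLinearTS [DecidableEq α] (V : Finset α) (F : Finset (Finset α)) : Prop :=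
  (∀ T ∈ F, T ⊆ V ∧ T.card = 3) ∧
    ∀ x ∈ V, ∀ y ∈ V, x ≠ y → (F.filter fun T => x ∈ T ∧ y ∈ T).card ≤ 1

/-- Steiner triple system on `V`. -/
def IsSTS [DecidableEq α] (V : Finset α) (F : Finset (Finset α)) : Prop :=
  (∀ T ∈ F, T ⊆ V ∧ T.card = 3) ∧
    ∀ x ∈ V, ∀ y ∈ V, x ≠ y → (F.filter fun T => x ∈ T ∧ y ∈ T).card = 1

/-- Neighbourhood of `V'` with respect to the triple system `F` on `V`. -/
def nbhd [DecidableEq α] (V : Finset α) (F : Finset (Finset α)) (V' : Finset α) : Finset α :=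
  (V \ V').filter fun z => ∃ x ∈ V', ∃ y ∈ V', x ≠ y ∧ ({x, y, z} : Finset α) ∈ F

/-- `F` is spreading: the closure of every nontrivial subset is `V`. -/
def IsSpreading [DecidableEq α] (V : Finset α) (F : Finset (Finset α)) : Prop :=
  ∀ V' ⊆ V, 3 ≤ V'.card → V' ∉ F →
    ∀ W, V' ⊆ W → W ⊆ V → nbhd V F W = ∅ → W = V

/-- `F` is weakly spreading. -/
def IsWeaklySpreading [DecidableEq α] (V : Finset α) (F : Finset (Finset α)) : Prop :=
  ∀ F' ⊆ F, 2 ≤ F'.card →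
    ∀ W, F'.biUnion id ⊆ W → W ⊆ V → nbhd V F W = ∅ → W = V

/-- `Val(T)`: number of private neighbours of the triple `T`. -/
def valT [DecidableEq α] (V : Finset α) (F : Finset (Finset α)) (T : Finset α) : ℕ :=
  ((V \ T).filter fun v => (T.filter fun t => Covered F v t).card = 1).card

/-- Two triples are adjacent if pairs of each span a `C₄` in the complement of the skeleton. -/
def AdjT [DecidableEq α] (F : Finset (Finset α)) (T T' : Finset α) : Prop :=
  ∃ v₁ ∈ T, ∃ v₂ ∈ T, ∃ u₁ ∈ T', ∃ u₂ ∈ T',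
    v₁ ≠ v₂ ∧ u₁ ≠ u₂ ∧ v₁ ≠ u₁ ∧ v₁ ≠ u₂ ∧ v₂ ≠ u₁ ∧ v₂ ≠ u₂ ∧
    ¬Covered F v₁ u₁ ∧ ¬Covered F u₁ v₂ ∧ ¬Covered F v₂ u₂ ∧ ¬Covered F u₂ v₁

instance [DecidableEq α] (F : Finset (Finset α)) (T T' : Finset α) : Decidable (AdjT F T T') :=
  inferInstanceAs (Decidable (∃ v₁ ∈ T, ∃ v₂ ∈ T, ∃ u₁ ∈ T', ∃ u₂ ∈ T',
    v₁ ≠ v₂ ∧ u₁ ≠ u₂ ∧ v₁ ≠ u₁ ∧ v₁ ≠ u₂ ∧ v₂ ≠ u₁ ∧ v₂ ≠ u₂ ∧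
    ¬Covered F v₁ u₁ ∧ ¬Covered F u₁ v₂ ∧ ¬Covered F v₂ u₂ ∧ ¬Covered F u₂ v₁))

/-! ### The construction on `Option (Bool × ZMod 3 × ZMod p)` -/

/-- Points: six copies of `ZMod p` (indexed by `Bool × ZMod 3`) and one extra point `none`. -/
abbrev Pt (p : ℕ) := Option (Bool × ZMod 3 × ZMod p)

def cst (p : ℕ) (b : Bool) : ZMod p := if b then 1 else 0

/-- Triples with two points in one class. -/
def triA {p : ℕ} (b : Bool) (j : ZMod 3) (x y : ZMod p) : Finset (Pt p) :=
  {some (b, j, x), some (b, j, y), some (!b, j + 1, x + y)}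

/-- Transversal triples. -/
def triB {p : ℕ} (b : Bool) (x y : ZMod p) : Finset (Pt p) :=
  {some (b, 0, x), some (b, 1, y), some (b, 2, cst p b - x - y)}

/-- Triples through the extra point. -/
def triC {p : ℕ} (j : ZMod 3) (x : ZMod p) : Finset (Pt p) :=
  {none, some (false, j, x), some (true, j + 1, 2 * x)}

/-- The triple system. -/
def sysF (p : ℕ) [Fact p.Prime] : Finset (Finset (Pt p)) :=
  (((Finset.univ : Finset (Bool × ZMod 3)) ×ˢ
      Finset.powersetCard 2 (Finset.univ : Finset (ZMod p))).image
    fun q => insert (some (!q.1.1, q.1.2 + 1, ∑ x ∈ q.2, x))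
      (q.2.image fun x => some (q.1.1, q.1.2, x)))
  ∪ (Finset.univ : Finset (Bool × ZMod p × ZMod p)).image (fun q => triB q.1 q.2.1 q.2.2)
  ∪ (Finset.univ : Finset (ZMod 3 × ZMod p)).image (fun q => triC q.1 q.2)

lemma mem_sysF {p : ℕ} [Fact p.Prime] (T : Finset (Pt p)) :
    T ∈ sysF p ↔ (∃ b j x y, x ≠ y ∧ T = triA b j x y) ∨ (∃ b x y, T = triB b x y) ∨
      ∃ j x, T = triC j x := by
  have key : ∀ (b : Bool) (j : ZMod 3) (x y : ZMod p), x ≠ y →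
      insert (some (!b, j + 1, ∑ x ∈ ({x, y} : Finset (ZMod p)), x))
      (({x, y} : Finset (ZMod p)).image fun x => some (b, j, x)) = triA b j x y := by
    intro b j x y h
    rw [Finset.sum_pair h]
    ext q
    simp [triA]
    tauto
  unfold sysF
  simp only [Finset.mem_union, Finset.mem_image, Finset.mem_product, Finset.mem_univ, true_and,
    Finset.mem_powersetCard, Finset.subset_univ, Prod.exists, or_assoc]
  refine or_congr ?_ (or_congr ?_ ?_)
  · constructor
    · rintro ⟨b, j, S, hS, rfl⟩
      obtain ⟨x, y, h, rfl⟩ := Finset.card_eq_two.mp hS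
      exact ⟨b, j, x, y, h, key b j x y h⟩
    · rintro ⟨b, j, x, y, h, rfl⟩
      exact ⟨b, j, {x, y}, Finset.card_pair h, key b j x y h⟩
  · simp only [eq_comm]
  · simp only [eq_comm]

lemma card_sysF (p : ℕ) [Fact p.Prime] : (sysF p).card ≤ 5 * p ^ 2 := by
  unfold sysF
  refine (Finset.card_union_le _ _).trans ?_
  refine (Nat.add_le_add_right (Finset.card_union_le _ _) _).trans ?_
  refine (Nat.add_le_add (Nat.add_le_add Finset.card_image_le Finset.card_image_le)
    Finset.card_image_le).trans ?_
  simp only [Finset.card_product, Finset.card_powersetCard, Finset.card_univ, Fintype.card_prod,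
    Fintype.card_bool, ZMod.card]
  have h1 : 1 ≤ p := (Fact.out : p.Prime).one_le
  have h := Nat.choose_two_right p
  have h2 : 2 * p.choose 2 = p * (p - 1) := by
    rw [h]; exact Nat.mul_div_cancel' (Nat.even_mul_pred_self p).two_dvd
  obtain ⟨k, rfl⟩ : ∃ k, p = k + 1 := ⟨p - 1, by omega⟩
  simp only [Nat.add_sub_cancel] at h2
  nlinarith

/-- The third point of the triple through two points. -/
def third {p : ℕ} [Fact p.Prime] : Pt p → Pt p → Pt p
  | none, none => none
  | none, some (b, j, x) => if b then some (false, j + 2, x / 2) else some (true, j + 1, 2 * x)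
  | some (b, j, x), none => if b then some (false, j + 2, x / 2) else some (true, j + 1, 2 * x)
  | some (b, j, x), some (b', j', y) =>
    if b = b' then (if j = j' then some (!b, j + 1, x + y)
      else some (b, -(j + j'), cst p b - x - y))
    else if j' = j + 1 then (if y = 2 * x then none else some (b, j, y - x))
    else if j = j' + 1 then (if x = 2 * y then none else some (b', j', x - y))
    else none

lemma tri_aux {α : Type*} [DecidableEq α] (t : α → α → α) (a b c : α)
    (h1 : t a b = c) (h2 : t b a = c) (h3 : t a c = b) (h4 : t c a = b)
    (h5 : t b c = a) (h6 : t c b = a) (hab : a ≠ b) (hac : a ≠ c) (hbc : b ≠ c) :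
    ({a, b, c} : Finset α).card = 3 ∧ ∀ u ∈ ({a, b, c} : Finset α),
      ∀ v ∈ ({a, b, c} : Finset α), u ≠ v → ({a, b, c} : Finset α) = {u, v, t u v} := by
  refine ⟨Finset.card_eq_three.mpr ⟨a, b, c, hab, hac, hbc, rfl⟩, ?_⟩
  intro u hu v hv huv
  simp only [Finset.mem_insert, Finset.mem_singleton] at hu hv
  rcases hu with rfl | rfl | rfl <;> rcases hv with rfl | rfl | rfl <;>
    first
    | exact absurd rfl huv
    | (ext q; simp only [Finset.mem_insert, Finset.mem_singleton, h1, h2, h3, h4, h5, h6] <;> tauto)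

lemma z3a (j : ZMod 3) : j + 1 ≠ j := by revert j; decide
lemma z3b (j : ZMod 3) : j ≠ j + 1 := by revert j; decide
lemma z3c (j : ZMod 3) : j ≠ j + 1 + 1 := by revert j; decide
lemma z3d (j : ZMod 3) : j + 1 + 2 = j := by revert j; decide
lemma z3f (j : ZMod 3) : j = 0 ∨ j = 1 ∨ j = 2 := by revert j; decide
lemma z3g (j : ZMod 3) : j + 2 + 2 = j + 1 := by revert j; decide
lemma z3h : ∀ i k : ZMod 3, i ≠ k → i + 1 ≠ k → k = i + 2 := by decide
lemma z3i : ∀ i k : ZMod 3, i ≠ k → i + 2 ≠ k → k = i + 1 := by decide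
lemma z3j : ∀ i j : ZMod 3, ∃ k, i ≠ k ∧ j ≠ k := by decide
lemma z3k : ∀ i j k l : ZMod 3, i ≠ j → i ≠ k → j ≠ k → l = i ∨ l = j ∨ l = k := by decide
lemma z3l (j : ZMod 3) : j + 2 ≠ j + 1 := by revert j; decide
lemma z3e (j : ZMod 3) : j + 2 + 1 = j := by revert j; decide

lemma sysF_tri {p : ℕ} [Fact p.Prime] (h2 : (2 : ZMod p) ≠ 0) (T : Finset (Pt p))
    (hT : T ∈ sysF p) :
    T.card = 3 ∧ ∀ u ∈ T, ∀ v ∈ T, u ≠ v → T = {u, v, third u v} := by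
  rcases (mem_sysF T).mp hT with ⟨b, j, x, y, hxy, rfl⟩ | ⟨b, x, y, rfl⟩ | ⟨j, x, rfl⟩
  · have e1 : x + y ≠ 2 * x := fun h => hxy (by linear_combination -h)
    have e2 : x + y ≠ 2 * y := fun h => hxy (by linear_combination h)
    apply tri_aux third
    · simp [third]
    · simp [third, add_comm]
    · cases b <;> simp [third, e1]
    · cases b <;> simp [third, e1, z3c]
    · cases b <;> simp [third, e2]
    · cases b <;> simp [third, e2, z3c]
    · simp [hxy]
    · cases b <;> simp
    · cases b <;> simp
  · have d1 : (0 : ZMod 3) ≠ 1 := by decide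
    have d2 : (0 : ZMod 3) ≠ 2 := by decide
    have d3 : (1 : ZMod 3) ≠ 2 := by decide
    have f1 : -((0 : ZMod 3) + 1) = 2 := by decide
    have f2 : -((0 : ZMod 3) + 2) = 1 := by decide
    have f3 : -((1 : ZMod 3) + 2) = 0 := by decide
    have f1' : -((1 : ZMod 3) + 0) = 2 := by decide
    have f2' : -((2 : ZMod 3) + 0) = 1 := by decide
    have f3' : -((2 : ZMod 3) + 1) = 0 := by decide
    apply tri_aux third
    · simp only [third, if_true, if_neg d1, f1]
    · simp only [third, if_true, if_neg d1.symm, f1']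
      congr 3; ring
    · simp only [third, if_true, if_neg d2, f2]
      congr 3; ring
    · simp only [third, if_true, if_neg d2.symm, f2']
      congr 3; ring
    · simp only [third, if_true, if_neg d3, f3]
      congr 3; ring
    · simp only [third, if_true, if_neg d3.symm, f3']
      congr 3; ring
    · simp [d1]
    · simp [d2]
    · simp [d3]
  · apply tri_aux third
    · simp [third]
    · simp [third]
    · simp [third, z3d, h2]
    · simp [third, z3d, h2]
    · simp [third]
    · simp [third, z3c]
    · simp
    · simp
    · simp

lemma sysF_linear {p : ℕ} [Fact p.Prime] (h2 : (2 : ZMod p) ≠ 0) :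
    IsLinearTS (Finset.univ) (sysF p) := by
  refine ⟨fun T hT => ⟨Finset.subset_univ _, (sysF_tri h2 T hT).1⟩, ?_⟩
  intro x _ y _ hxy
  refine Finset.card_le_one.mpr ?_
  intro T hT T' hT'
  simp only [Finset.mem_filter] at hT hT'
  rw [(sysF_tri h2 T hT.1).2 x hT.2.1 y hT.2.2 hxy,
    (sysF_tri h2 T' hT'.1).2 x hT'.2.1 y hT'.2.2 hxy]

/-! ### Spreading -/

/-- Closure properties of a closed set, in coordinates. -/
structure ClosedSys {p : ℕ} [Fact p.Prime] (S : Bool → ZMod 3 → ZMod p → Prop) (I : Prop) :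
    Prop where
  a1 : ∀ b j x y, x ≠ y → S b j x → S b j y → S (!b) (j + 1) (x + y)
  a2 : ∀ b j x z, z ≠ 2 * x → S b j x → S (!b) (j + 1) z → S b j (z - x)
  b1 : ∀ b j x y, S b j x → S b (j + 1) y → S b (j + 2) (cst p b - x - y)
  c1 : ∀ j x, S false j x → S true (j + 1) (2 * x) → I
  c2 : ∀ j x, I → S false j x → S true (j + 1) (2 * x)
  c3 : ∀ j x, I → S true j x → S false (j + 2) (x / 2)

lemma closedSys_of {p : ℕ} [Fact p.Prime] (h2 : (2 : ZMod p) ≠ 0) (W : Finset (Pt p))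
    (hW : ∀ T ∈ sysF p, ∀ u ∈ T, ∀ v ∈ T, u ≠ v → u ∈ W → v ∈ W → T ⊆ W) :
    ClosedSys (p := p) (fun b j x => some (b, j, x) ∈ W) (none ∈ W) := by
  have hA : ∀ b j (x y : ZMod p), x ≠ y → triA b j x y ∈ sysF p := fun b j x y h =>
    (mem_sysF _).mpr (Or.inl ⟨b, j, x, y, h, rfl⟩)
  have hB : ∀ b (x y : ZMod p), triB b x y ∈ sysF p := fun b x y =>
    (mem_sysF _).mpr (Or.inr (Or.inl ⟨b, x, y, rfl⟩))
  have hC : ∀ j (x : ZMod p), triC j x ∈ sysF p := fun j x =>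
    (mem_sysF _).mpr (Or.inr (Or.inr ⟨j, x, rfl⟩))
  refine ⟨?_, ?_, ?_, ?_, ?_, ?_⟩
  · intro b j x y h hx hy
    exact hW _ (hA b j x y h) _ (by simp [triA]) _ (by simp [triA]) (by simpa using h) hx hy
      (by simp [triA])
  · intro b j x z h hx hz
    have hne : x ≠ z - x := fun e => h (by linear_combination -e)
    exact hW _ (hA b j x (z - x) hne) (some (b, j, x)) (by simp [triA])
      (some (!b, j + 1, z)) (by simp [triA]) (by cases b <;> simp) hx hz
      (by simp [triA])
  · intro b j x y hx hy
    have hj : j = 0 ∨ j = 1 ∨ j = 2 := z3f j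
    have f1 : (1 : ZMod 3) + 1 = 2 := by decide
    have f2 : (2 : ZMod 3) + 1 = 0 := by decide
    have f3 : (1 : ZMod 3) + 2 = 0 := by decide
    have f4 : (2 : ZMod 3) + 2 = 1 := by decide
    have d1 : (0 : ZMod 3) ≠ 1 := by decide
    have d2 : (1 : ZMod 3) ≠ 2 := by decide
    have d3 : (2 : ZMod 3) ≠ 0 := by decide
    rcases hj with rfl | rfl | rfl
    · simp only [zero_add] at *
      exact hW _ (hB b x y) _ (by simp [triB]) _ (by simp [triB]) (by simp [d1]) hx hy
        (by simp [triB])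
    · simp only [f1, f3] at *
      exact hW _ (hB b (cst p b - x - y) x) (some (b, 1, x)) (by simp [triB])
        (some (b, 2, y)) (by simp [triB]; right; right; ring) (by simp [d2]) hx hy
        (by simp [triB])
    · simp only [f2, f4] at *
      exact hW _ (hB b y (cst p b - x - y)) (some (b, 2, x)) (by simp [triB])
        (some (b, 0, y)) (by simp [triB]) (by simp [d3]) hx hy
        (by simp [triB])
  · intro j x hx hy
    exact hW _ (hC j x) _ (by simp [triC]) _ (by simp [triC]) (by simp) hx hy (by simp [triC])
  · intro j x hI hx
    exact hW _ (hC j x) _ (by simp [triC]) _ (by simp [triC]) (by simp) hI hx (by simp [triC])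
  · intro j x hI hx
    refine hW _ (hC (j + 2) (x / 2)) none (by simp [triC]) (some (true, j, x)) ?_ (by simp) hI hx
      (by simp [triC])
    simp [triC, z3e, mul_div_cancel₀ x h2]

section
variable {p : ℕ} [Fact p.Prime] {S : Bool → ZMod 3 → ZMod p → Prop} {I : Prop}

lemma z3cases (i j : ZMod 3) : j = i ∨ j = i + 1 ∨ j = i + 2 := by
  revert i j; decide

lemma ClosedSys.b2 (h : ClosedSys S I) (b j x y) (hx : S b j x) (hy : S b (j + 2) y) :
    S b (j + 1) (cst p b - x - y) := by
  have := h.b1 b (j + 2) y x hy (by rwa [z3e])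
  have e : j + 2 + 2 = j + 1 := z3g j
  rw [e] at this
  convert this using 1
  ring

/-- General transversal rule. -/
lemma ClosedSys.b3 (h : ClosedSys S I) (b : Bool) (i j k : ZMod 3) (hij : i ≠ j) (hik : i ≠ k)
    (hjk : j ≠ k) (x y : ZMod p) (hx : S b i x) (hy : S b j y) : S b k (cst p b - x - y) := by
  rcases z3cases i j with rfl | rfl | rfl
  · exact absurd rfl hij
  · have : k = i + 2 := z3h i k hik hjk
    subst this; exact h.b1 b i x y hx hy
  · have : k = i + 1 := z3i i k hik hjk
    subst this; exact h.b2 b i x y hx hy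

lemma add_closed_all (P : ZMod p → Prop) (d y : ZMod p) (hd : d ≠ 0) (hy : P y)
    (hP : ∀ y, P y → P (y + d)) : ∀ z, P z := by
  have hn : ∀ n : ℕ, P (y + n * d) := by
    intro n
    induction n with
    | zero => simpa using hy
    | succ n ih =>
      have := hP _ ih
      push_cast
      convert this using 1
      ring
  intro z
  have := hn ((z - y) / d).val
  rw [ZMod.natCast_zmod_val, div_mul_cancel₀ _ hd] at this
  simpa using this

lemma ClosedSys.fullb (h : ClosedSys S I) (b : Bool) (i j : ZMod 3) (hij : i ≠ j)
    (x x' y : ZMod p) (hxx : x ≠ x') (hx : S b i x) (hx' : S b i x') (hy : S b j y) :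
    ∀ k z, S b k z := by
  obtain ⟨k, hik, hjk⟩ : ∃ k, i ≠ k ∧ j ≠ k := z3j i j
  have hj : ∀ z, S b j z := by
    refine add_closed_all _ (x - x') y (sub_ne_zero.mpr hxx) hy ?_
    intro w hw
    have h1 := h.b3 b i j k hij hik hjk x w hx hw
    have h2 := h.b3 b i k j hik hij hjk.symm x' _ hx' h1
    convert h2 using 1
    ring
  have hk : ∀ z, S b k z := by
    intro z
    have h1 := h.b3 b i j k hij hik hjk x (cst p b - x - z) hx (hj _)
    convert h1 using 1
    ring
  have hi : ∀ z, S b i z := by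
    intro z
    have h1 := h.b3 b j k i hjk hij.symm hik.symm y (cst p b - y - z) hy (hk _)
    convert h1 using 1
    ring
  intro l
  have : l = i ∨ l = j ∨ l = k := z3k i j k l hij hik hjk
  rcases this with rfl | rfl | rfl <;> assumption

lemma ClosedSys.full (h : ClosedSys S I) (h2 : (2 : ZMod p) ≠ 0) (b : Bool)
    (hb : ∀ k z, S b k z) : (∀ b k z, S b k z) ∧ I := by
  have hnb : ∀ k z, S (!b) k z := by
    intro k z
    have h1 := h.a1 b (k + 2) (z / 2 + 1) (z / 2 - 1)
      (fun e => h2 (by linear_combination e)) (hb _ _) (hb _ _)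
    rw [z3e] at h1
    convert h1 using 1
    field_simp
    ring
  have hall : ∀ b k z, S b k z := by
    intro b'
    rcases Bool.eq_or_eq_not b' b with rfl | rfl
    · exact hb
    · exact hnb
  exact ⟨hall, h.c1 0 0 (hall _ _ _) (hall _ _ _)⟩

/-- A class with two points. -/
lemma ClosedSys.two (h : ClosedSys S I) (h2 : (2 : ZMod p) ≠ 0)
    (H : ∀ b i j, i ≠ j → ∀ x x' y, x ≠ x' → S b i x → S b i x' → ¬ S b j y)
    (b : Bool) (j : ZMod 3) (x y : ZMod p) (hxy : x ≠ y) (hx : S b j x) (hy : S b j y) :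
    ¬ I ∧ ∀ b' k z, S b' k z → (b' = b ∧ k = j ∧ (z = x ∨ z = y)) ∨
      (b' = !b ∧ k = j + 1 ∧ z = x + y) := by
  have hw := h.a1 b j x y hxy hx hy
  have hw1 : ∀ w, S (!b) (j + 1) w → w = x + y := by
    intro w hw'
    by_contra hne
    have h1 := h.a1 (!b) (j + 1) w (x + y) hne hw' hw
    rw [Bool.not_not] at h1
    exact H b j (j + 1 + 1) (z3c j) x y _ hxy hx hy h1
  have hS : ∀ z, S b j z → z = x ∨ z = y := by
    intro z hz
    by_contra hne
    push Not at hne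
    have h1 := hw1 _ (h.a1 b j x z hne.1.symm hx hz)
    exact hne.2 (by linear_combination h1)
  have hS' : ∀ k z, k ≠ j → ¬ S b k z := fun k z hk => H b j k hk.symm x y z hxy hx hy
  have hN2 : ∀ u, ¬ S (!b) (j + 2) u := by
    intro u hu
    have hex : ∃ t, S b j t ∧ t ≠ 2 * u := by
      by_cases hxu : x = 2 * u
      · exact ⟨y, hy, fun e => hxy (hxu.trans e.symm)⟩
      · exact ⟨x, hx, hxu⟩
    obtain ⟨t, ht, htu⟩ := hex
    have h1 := h.a2 (!b) (j + 2) u t htu hu (by rw [z3e, Bool.not_not]; exact ht)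
    refine H (!b) (j + 2) (j + 1) (z3l j) u (t - u) _ ?_ hu h1 hw
    intro e
    exact htu (by linear_combination -e)
  have hN0 : ∀ u, ¬ S (!b) j u := fun u hu => hN2 _ (h.b1 (!b) j u _ hu hw)
  refine ⟨?_, ?_⟩
  · intro hI
    cases b
    · have e1 := hw1 _ (h.c2 j x hI hx)
      have e2 := hw1 _ (h.c2 j y hI hy)
      exact hxy (mul_left_cancel₀ h2 (e1.trans e2.symm))
    · exact hN2 _ (h.c3 j x hI hx)
  · intro b' k z hz
    rcases Bool.eq_or_eq_not b' b with rfl | rfl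
    · left
      have hk : k = j := by
        by_contra hk
        exact hS' k z hk hz
      subst hk
      exact ⟨rfl, rfl, hS z hz⟩
    · right
      rcases z3cases j k with rfl | rfl | rfl
      · exact absurd hz (hN0 z)
      · exact ⟨rfl, rfl, hw1 z hz⟩
      · exact absurd hz (hN2 z)

/-- All classes subsingletons and the extra point present. -/
lemma ClosedSys.oneI (h : ClosedSys S I) (h2 : (2 : ZMod p) ≠ 0)
    (H : ∀ b j x y, S b j x → S b j y → x = y) (hI : I) (j : ZMod 3) (x : ZMod p)
    (hx : S false j x) : ∀ b' k z, S b' k z → (b' = false ∧ k = j ∧ z = x) ∨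
      (b' = true ∧ k = j + 1 ∧ z = 2 * x) := by
  have hf : ∀ k z, S false k z → k = j ∧ z = x := by
    intro k z hz
    by_cases hk : k = j
    · subst hk; exact ⟨rfl, H _ _ _ _ hz hx⟩
    exfalso
    obtain ⟨l, hkl, hjl⟩ : ∃ l, k ≠ l ∧ j ≠ l := z3j k j
    have h3 := h.b3 false j k l (Ne.symm hk) hjl hkl x z hx hz
    have g1 := h.c2 _ _ hI hx
    have g2 := h.c2 _ _ hI hz
    have g3 := h.c2 _ _ hI h3
    have g4 := h.b3 true (j + 1) (k + 1) (l + 1) (by simpa using Ne.symm hk) (by simpa using hjl)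
      (by simpa using hkl) _ _ g1 g2
    have e := H _ _ _ _ g3 g4
    simp only [cst] at e
    have : (1 : ZMod p) = 0 := by
      simp at e
      linear_combination -e
    exact one_ne_zero this
  intro b' k z hz
  cases b'
  · exact Or.inl ⟨rfl, hf k z hz⟩
  · right
    obtain ⟨e1, e2⟩ := hf _ _ (h.c3 _ _ hI hz)
    refine ⟨rfl, ?_, ?_⟩
    · rw [← e1, z3e]
    · rw [← e2, mul_div_cancel₀ _ h2]

lemma ClosedSys.adj (h : ClosedSys S I)
    (H : ∀ b j x y, S b j x → S b j y → x = y) (hI : ¬ I) (j : ZMod 3) (x y : ZMod p)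
    (hx : S false j x) (hy : S true (j + 1) y) : False := by
  by_cases e : y = 2 * x
  · subst e; exact hI (h.c1 _ _ hx hy)
  · have := H _ _ _ _ hx (h.a2 false j x y e hx hy)
    exact e (by linear_combination -this)

end

lemma closed_classify {p : ℕ} [Fact p.Prime] (h2 : (2 : ZMod p) ≠ 0) (W : Finset (Pt p))
    (hW : ∀ T ∈ sysF p, ∀ u ∈ T, ∀ v ∈ T, u ≠ v → u ∈ W → v ∈ W → T ⊆ W) :
    W = Finset.univ ∨ (∃ T ∈ sysF p, W ⊆ T) ∨ ∃ a b, W ⊆ {a, b} := by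
  have h := closedSys_of h2 W hW
  by_cases hfull : ∃ b, ∀ k (z : ZMod p), some (b, k, z) ∈ W
  · left
    obtain ⟨b, hb⟩ := hfull
    obtain ⟨h3, h4⟩ := h.full h2 b hb
    ext q
    rcases q with _ | ⟨b, k, z⟩
    · simpa using h4
    · simpa using h3 b k z
  right
  have H : ∀ b i j, i ≠ j → ∀ x x' y : ZMod p, x ≠ x' → some (b, i, x) ∈ W →
      some (b, i, x') ∈ W → ¬ some (b, j, y) ∈ W := fun b i j hij x x' y hxx hx hx' hy =>
    hfull ⟨b, h.fullb b i j hij x x' y hxx hx hx' hy⟩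
  by_cases htwo : ∃ b j, ∃ x y : ZMod p, x ≠ y ∧ some (b, j, x) ∈ W ∧ some (b, j, y) ∈ W
  · obtain ⟨b, j, x, y, hxy, hx, hy⟩ := htwo
    obtain ⟨h3, h4⟩ := h.two h2 H b j x y hxy hx hy
    left
    refine ⟨triA b j x y, (mem_sysF _).mpr (Or.inl ⟨b, j, x, y, hxy, rfl⟩), ?_⟩
    intro q hq
    rcases q with _ | ⟨b', k, z⟩
    · exact absurd hq h3
    · rcases h4 b' k z hq with ⟨rfl, rfl, rfl | rfl⟩ | ⟨rfl, rfl, rfl⟩ <;> simp [triA]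
  have H1 : ∀ b j, ∀ x y : ZMod p, some (b, j, x) ∈ W → some (b, j, y) ∈ W → x = y := by
    intro b j x y hx hy
    by_contra hxy
    exact htwo ⟨b, j, x, y, hxy, hx, hy⟩
  by_cases hI : none ∈ W
  · left
    by_cases hf : ∃ j, ∃ x : ZMod p, some (false, j, x) ∈ W
    · obtain ⟨j, x, hx⟩ := hf
      have h4 := h.oneI h2 H1 hI j x hx
      refine ⟨triC j x, (mem_sysF _).mpr (Or.inr (Or.inr ⟨j, x, rfl⟩)), ?_⟩
      intro q hq
      rcases q with _ | ⟨b', k, z⟩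
      · simp [triC]
      · rcases h4 b' k z hq with ⟨rfl, rfl, rfl⟩ | ⟨rfl, rfl, rfl⟩ <;> simp [triC]
    · refine ⟨triC 0 0, (mem_sysF _).mpr (Or.inr (Or.inr ⟨0, 0, rfl⟩)), ?_⟩
      intro q hq
      rcases q with _ | ⟨b', k, z⟩
      · simp [triC]
      · exfalso
        cases b'
        · exact hf ⟨k, z, hq⟩
        · exact hf ⟨_, _, h.c3 _ _ hI hq⟩
  by_cases hm : ∃ b i j, i ≠ j ∧ ∃ x y : ZMod p, some (b, i, x) ∈ W ∧ some (b, j, y) ∈ W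
  · left
    obtain ⟨b, i, j, hij, x, y, hx, hy⟩ := hm
    have hne : ∀ k, ∃ z : ZMod p, some (b, k, z) ∈ W := by
      intro k
      by_cases hik : i = k
      · subst hik; exact ⟨x, hx⟩
      by_cases hjk : j = k
      · subst hjk; exact ⟨y, hy⟩
      exact ⟨_, h.b3 b i j k hij hik hjk x y hx hy⟩
    have hemp : ∀ k (z : ZMod p), some (!b, k, z) ∉ W := by
      intro k z hz
      cases b
      · obtain ⟨u, hu⟩ := hne (k + 2)
        exact h.adj H1 hI (k + 2) u z hu (by rw [z3e]; exact hz)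
      · obtain ⟨u, hu⟩ := hne (k + 1)
        exact h.adj H1 hI k z u hz hu
    obtain ⟨u0, hu0⟩ := hne 0
    obtain ⟨u1, hu1⟩ := hne 1
    have hu2 := h.b3 b 0 1 2 (by decide) (by decide) (by decide) u0 u1 hu0 hu1
    refine ⟨triB b u0 u1, (mem_sysF _).mpr (Or.inr (Or.inl ⟨b, u0, u1, rfl⟩)), ?_⟩
    intro q hq
    rcases q with _ | ⟨b', k, z⟩
    · exact absurd hq hI
    · rcases Bool.eq_or_eq_not b' b with rfl | rfl
      · have hk : k = 0 ∨ k = 1 ∨ k = 2 := z3f k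
        rcases hk with rfl | rfl | rfl
        · rw [H1 _ _ _ _ hq hu0]; simp [triB]
        · rw [H1 _ _ _ _ hq hu1]; simp [triB]
        · rw [H1 _ _ _ _ hq hu2]; simp [triB]
      · exact absurd hq (hemp k z)
  · right
    have hb : ∀ b, ∃ a : Pt p, ∀ k z, some (b, k, z) ∈ W → some (b, k, z) = a := by
      intro b
      by_cases hex : ∃ k, ∃ z : ZMod p, some (b, k, z) ∈ W
      · obtain ⟨k, z, hz⟩ := hex
        refine ⟨some (b, k, z), ?_⟩
        intro k' z' hz'
        have hk : k' = k := by
          by_contra hk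
          exact hm ⟨b, k', k, hk, z', z, hz', hz⟩
        subst hk
        rw [H1 _ _ _ _ hz' hz]
      · exact ⟨none, fun k z hz => absurd ⟨k, z, hz⟩ hex⟩
    obtain ⟨a, ha⟩ := hb false
    obtain ⟨c, hc⟩ := hb true
    refine ⟨a, c, ?_⟩
    intro q hq
    rcases q with _ | ⟨b', k, z⟩
    · exact absurd hq hI
    · cases b'
      · rw [ha k z hq]; simp
      · rw [hc k z hq]; simp

lemma sysF_spreading {p : ℕ} [Fact p.Prime] (h2 : (2 : ZMod p) ≠ 0) :
    IsSpreading (Finset.univ) (sysF p) := by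
  intro V' _ hcard hV' W hVW _ hn
  have hW : ∀ T ∈ sysF p, ∀ u ∈ T, ∀ v ∈ T, u ≠ v → u ∈ W → v ∈ W → T ⊆ W := by
    intro T hT u hu v hv huv huW hvW
    have e := (sysF_tri h2 T hT).2 u hu v hv huv
    have h3 : third u v ∈ W := by
      by_contra hne
      have : third u v ∈ nbhd Finset.univ (sysF p) W := by
        simp only [nbhd, Finset.mem_filter, Finset.mem_sdiff, Finset.mem_univ, true_and]
        exact ⟨hne, u, huW, v, hvW, huv, e ▸ hT⟩
      rw [hn] at this
      simp at this
    rw [e]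
    intro q hq
    simp only [Finset.mem_insert, Finset.mem_singleton] at hq
    rcases hq with rfl | rfl | rfl <;> assumption
  rcases closed_classify h2 W hW with h | ⟨T, hT, hWT⟩ | ⟨a, b, hab⟩
  · exact h
  · exfalso
    have : V' = T := Finset.eq_of_subset_of_card_le (hVW.trans hWT)
      (by rw [(sysF_tri h2 T hT).1]; exact hcard)
    exact hV' (this ▸ hT)
  · exfalso
    have h1 := Finset.card_le_card (hVW.trans hab)
    have h3 : ({a, b} : Finset (Pt p)).card ≤ 2 := Finset.card_le_two
    omega

/-! ### Transfer to `ℕ` -/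

lemma transfer {β : Type} [Fintype β] [DecidableEq β] (F : Finset (Finset β))
    (hL : IsLinearTS Finset.univ F) (hS : IsSpreading Finset.univ F) :
    ∃ (V : Finset ℕ) (G : Finset (Finset ℕ)), V.card = Fintype.card β ∧ IsLinearTS V G ∧
      IsSpreading V G ∧ G.card = F.card := by
  let e : β ↪ ℕ := (Fintype.equivFin β).toEmbedding.trans Fin.valEmbedding
  have hmem : ∀ T : Finset β, T.map e ∈ F.map (Finset.mapEmbedding e).toEmbedding ↔ T ∈ F := by
    intro T
    exact Finset.mem_map' (Finset.mapEmbedding e).toEmbedding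
  refine ⟨Finset.univ.map e, F.map (Finset.mapEmbedding e).toEmbedding, by simp, ⟨?_, ?_⟩, ?_,
    by simp⟩
  · intro T hT
    obtain ⟨T, hT1, rfl⟩ := Finset.mem_map.mp hT
    refine ⟨Finset.map_subset_map.mpr (Finset.subset_univ _), ?_⟩
    exact (Finset.card_map e).trans (hL.1 T hT1).2
  · intro x hx y hy hxy
    obtain ⟨x, -, rfl⟩ := Finset.mem_map.mp hx
    obtain ⟨y, -, rfl⟩ := Finset.mem_map.mp hy
    have h1 := hL.2 x (Finset.mem_univ _) y (Finset.mem_univ _) (fun h => hxy (by rw [h]))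
    rw [Finset.card_le_one] at h1 ⊢
    intro T hT T' hT'
    simp only [Finset.mem_filter] at hT hT'
    obtain ⟨hT, hTx, hTy⟩ := hT
    obtain ⟨hT', hTx', hTy'⟩ := hT'
    obtain ⟨T, hT, rfl⟩ := Finset.mem_map.mp hT
    obtain ⟨T', hT', rfl⟩ := Finset.mem_map.mp hT'
    have hx1 : x ∈ T := (Finset.mem_map' e).mp hTx
    have hy1 : y ∈ T := (Finset.mem_map' e).mp hTy
    have hx2 : x ∈ T' := (Finset.mem_map' e).mp hTx'
    have hy2 : y ∈ T' := (Finset.mem_map' e).mp hTy'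
    rw [h1 T (by simp [*]) T' (by simp [*])]
  · intro V' hV' hc hVF W hVW hWV hn
    obtain ⟨A, -, rfl⟩ := Finset.subset_map_iff.mp hV'
    obtain ⟨B, -, rfl⟩ := Finset.subset_map_iff.mp hWV
    rw [hmem] at hVF
    rw [Finset.card_map] at hc
    congr 1
    refine hS A (Finset.subset_univ _) hc hVF B (Finset.map_subset_map.mp hVW)
      (Finset.subset_univ _) ?_
    rw [Finset.eq_empty_iff_forall_notMem]
    intro z hz
    simp only [nbhd, Finset.mem_filter, Finset.mem_sdiff, Finset.mem_univ, true_and] at hz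
    obtain ⟨hzB, x, hx, y, hy, hxy, hT⟩ := hz
    have : e z ∈ nbhd (Finset.univ.map e) (F.map (Finset.mapEmbedding e).toEmbedding)
        (B.map e) := by
      simp only [nbhd, Finset.mem_filter, Finset.mem_sdiff]
      refine ⟨⟨Finset.mem_map_of_mem _ (Finset.mem_univ _), fun h => hzB ((Finset.mem_map' e).mp h)⟩,
        e x, Finset.mem_map_of_mem _ hx, e y, Finset.mem_map_of_mem _ hy,
        fun h => hxy (e.injective h), ?_⟩
      have h1 := (hmem _).mpr hT
      simpa only [Finset.map_insert, Finset.map_singleton] using h1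
    rw [hn] at this
    simp at this

/-- For every `ε > 0` and every `N` there exist `n ≥ N` and a spreading
linear triple system on an `n`-element set with fewer than `(5/36 + ε) n²` triples. -/
theorem statement_3 (ε : ℝ) (hε : 0 < ε) (N : ℕ) :
    ∃ n : ℕ, N ≤ n ∧
      ∃ (V : Finset ℕ) (F : Finset (Finset ℕ)),
        V.card = n ∧ IsLinearTS V F ∧ IsSpreading V F ∧
        (F.card : ℝ) < (5 / 36 + ε) * (n : ℝ) ^ 2 := by
  obtain ⟨p, hp, hprime⟩ := Nat.exists_infinite_primes (N + 3)
  have : Fact p.Prime := ⟨hprime⟩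
  have h2 : (2 : ZMod p) ≠ 0 := by
    intro h
    have h' : ((2 : ℕ) : ZMod p) = 0 := by exact_mod_cast h
    rw [ZMod.natCast_eq_zero_iff] at h'
    have := Nat.le_of_dvd (by norm_num) h'
    omega
  obtain ⟨V, F, hV, hL, hS, hF⟩ := transfer (sysF p) (sysF_linear h2) (sysF_spreading h2)
  have hcard : Fintype.card (Pt p) = 6 * p + 1 := by
    simp [Pt, Fintype.card_option, Fintype.card_prod, ZMod.card]
    ring
  rw [hcard] at hV
  refine ⟨6 * p + 1, by omega, V, F, hV, hL, hS, ?_⟩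
  have h5 : (F.card : ℝ) ≤ 5 * (p : ℝ) ^ 2 := by
    rw [hF]; exact_mod_cast card_sysF p
  have hp0 : (0 : ℝ) ≤ p := Nat.cast_nonneg p
  have : 0 < ε * (6 * (p : ℝ) + 1) ^ 2 := by positivity
  push_cast
  nlinarith
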